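/- For the auxiliary reverse process, the function Δ_T(x) := p_{X_T^GMM}(x) − p_{Ȳ_T}(x) satisfies ∫_{ℝ^d} Δ_T(x) dx ≤ C T^{−3} for some absolute constant C > 0. -/

import Mathlib

open MeasureTheory Real Finset
open scoped RealInnerProductSpace BigOperators

noncomputable section

/-- Density of the Gaussian distribution `N(m, v I_d)` on `ℝ^d`. -/
def gaussV (d : ℕ) (v : ℝ) (m x : EuclideanSpace ℝ (Fin d)) : ℝ :=
  (2 * Real.pi * v) ^ (-(d : ℝ) / 2) * Real.exp (-‖x - m‖ ^ 2 / (2 * v))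

/-- Density of the Gaussian mixture `∑_k w_k N(√abar μ_k, I_d)`. -/
def mixDensity (d K : ℕ) (w : Fin K → ℝ) (μ : Fin K → EuclideanSpace ℝ (Fin d))
    (abar : ℝ) (x : EuclideanSpace ℝ (Fin d)) : ℝ :=
  ∑ k, w k * gaussV d 1 (Real.sqrt abar • μ k) x

/-- Posterior component weights `π_k^{(t)}(x)`. -/
def postWeight (d K : ℕ) (w : Fin K → ℝ) (μ : Fin K → EuclideanSpace ℝ (Fin d))
    (abar : ℝ) (k : Fin K) (x : EuclideanSpace ℝ (Fin d)) : ℝ :=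
  w k * Real.exp (-‖x - Real.sqrt abar • μ k‖ ^ 2 / 2) /
    ∑ i, w i * Real.exp (-‖x - Real.sqrt abar • μ i‖ ^ 2 / 2)

/-- Closed form of the score `∇ log p_{X_t^GMM}` of the diffused GMM. -/
def gmmScore (d K : ℕ) (w : Fin K → ℝ) (μ : Fin K → EuclideanSpace ℝ (Fin d))
    (abar : ℝ) (x : EuclideanSpace ℝ (Fin d)) : EuclideanSpace ℝ (Fin d) :=
  -x + Real.sqrt abar • ∑ k, postWeight d K w μ abar k x • μ k

/-- The Jacobian matrix `J_t(x)` of the diffused GMM score. -/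
def gmmJac (d K : ℕ) (w : Fin K → ℝ) (μ : Fin K → EuclideanSpace ℝ (Fin d))
    (abar : ℝ) (x : EuclideanSpace ℝ (Fin d)) : Matrix (Fin d) (Fin d) ℝ :=
  Matrix.of fun i j =>
    (if i = j then (-1 : ℝ) else 0) +
      abar * ((∑ k, postWeight d K w μ abar k x * (μ k i * μ k j)) -
        (∑ k, postWeight d K w μ abar k x * μ k i) *
          (∑ k, postWeight d K w μ abar k x * μ k j))

/-- The quantity `ζ_k^{(t)}(x)`, where `abar` plays the role of `ᾱ_t` and `a` that of `α_t`. -/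
def zeta (d K : ℕ) (w : Fin K → ℝ) (μ : Fin K → EuclideanSpace ℝ (Fin d))
    (abar a : ℝ) (k : Fin K) (x : EuclideanSpace ℝ (Fin d)) : ℝ :=
  (1 - a ^ 2) / (2 * a ^ 2) *
      (‖x - Real.sqrt abar • μ k‖ ^ 2 -
        ∑ i, postWeight d K w μ abar i x * ‖x - Real.sqrt abar • μ i‖ ^ 2) +
    (1 - a) / a ^ 2 *
      ⟪gmmScore d K w μ abar x,
        ∑ i, postWeight d K w μ abar i x • (Real.sqrt abar • (μ i - μ k))⟫

/-- The typical set `E_t`. -/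
def Eset (d K T : ℕ) (w : Fin K → ℝ) (μ : Fin K → EuclideanSpace ℝ (Fin d))
    (abar a C₁ C₂ : ℝ) : Set (EuclideanSpace ℝ (Fin d)) :=
  {x | Matrix.trace (1 + gmmJac d K w μ abar x) ≤ C₁ * Real.log ((K : ℝ) * T) ∧
    ∑ k, postWeight d K w μ abar k x * Real.exp (-(zeta d K w μ abar a k x)) ≤
      Real.exp (C₂ * (1 - a) ^ 2 * Real.log ((K : ℝ) * T) ^ 2)}

/-- The set `A_t`. -/
def Aset (d K T : ℕ) (w : Fin K → ℝ) (μ : Fin K → EuclideanSpace ℝ (Fin d))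
    (abar cR C₇ : ℝ) : Set (EuclideanSpace ℝ (Fin d)) :=
  {x | -(C₇ * d * Real.log ((d : ℝ) * T)) ≤ Real.log (mixDensity d K w μ abar x) ∧
    ‖x‖ ≤ Real.sqrt (2 * (T : ℝ) ^ (2 * cR) + 16 * d * Real.log T)}

/-- The set `T_k`. -/
def Tset (d K T : ℕ) (μ : Fin K → EuclideanSpace ℝ (Fin d))
    (abar C₅ : ℝ) (k : Fin K) : Set (EuclideanSpace ℝ (Fin d)) :=
  {x | ∀ i : Fin K,
    |⟪x - Real.sqrt abar • μ k, Real.sqrt abar • (μ i - μ k)⟫| ≤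
      C₅ * Real.sqrt (abar * Real.log ((K : ℝ) * T)) * ‖μ i - μ k‖}

/-- Forward (diffused) marginal density at noise level `abar`, starting from density `f₀`. -/
def fwdDensity (d : ℕ) (f₀ : EuclideanSpace ℝ (Fin d) → ℝ) (abar : ℝ)
    (x : EuclideanSpace ℝ (Fin d)) : ℝ :=
  ∫ y, gaussV d (1 - abar) (Real.sqrt abar • y) x * f₀ y

/-- Stein score of a density `p`. -/
def scoreOf (d : ℕ) (p : EuclideanSpace ℝ (Fin d) → ℝ)
    (x : EuclideanSpace ℝ (Fin d)) : EuclideanSpace ℝ (Fin d) :=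
  gradient (fun y => Real.log (p y)) x

/-- Truncation (clipping) of a score estimate at radius `R`. -/
def clipFn (d : ℕ) (R : ℝ) (s : EuclideanSpace ℝ (Fin d) → EuclideanSpace ℝ (Fin d))
    (x : EuclideanSpace ℝ (Fin d)) : EuclideanSpace ℝ (Fin d) :=
  if ‖s x‖ ≤ R then s x else 0

/-- Total-variation distance between two densities on `ℝ^d`. -/
def tvDist (d : ℕ) (p q : EuclideanSpace ℝ (Fin d) → ℝ) : ℝ :=
  (1 / 2) * ∫ x, |p x - q x|

/-- Density of the one-step (DDPM-type) reverse Gaussian transition with rate `a`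
and drift field `s`, from `y` to `x`. -/
def ddpmKernel (d : ℕ) (a : ℝ) (s : EuclideanSpace ℝ (Fin d) → EuclideanSpace ℝ (Fin d))
    (y x : EuclideanSpace ℝ (Fin d)) : ℝ :=
  gaussV d (1 - a) ((Real.sqrt a)⁻¹ • (y + (1 - a) • s y)) x

/-- Density of `Y_{T-n}` for the DDPM sampler run with rates `α` and score estimates `s`. -/
def ddpmDensity (d T : ℕ) (α : ℕ → ℝ)
    (s : ℕ → EuclideanSpace ℝ (Fin d) → EuclideanSpace ℝ (Fin d)) :
    ℕ → EuclideanSpace ℝ (Fin d) → ℝ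
  | 0 => gaussV d 1 0
  | n + 1 => fun x =>
      ∫ y, ddpmKernel d (α (T - n)) (s (T - n)) y x * ddpmDensity d T α s n y

/-- Density (on `ℝ^d`) of `Ȳ_{T-n}^-` for the auxiliary reverse process. -/
def pbarMinus (d K T : ℕ) (w : Fin K → ℝ) (μ : Fin K → EuclideanSpace ℝ (Fin d))
    (αbar α : ℕ → ℝ) (C₁ C₂ : ℝ) : ℕ → EuclideanSpace ℝ (Fin d) → ℝ
  | 0 => (Eset d K T w μ (αbar T) (α T) C₁ C₂).indicator (gaussV d 1 0)
  | n + 1 =>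
      (Eset d K T w μ (αbar (T - n)) (α (T - n)) C₁ C₂).indicator fun x =>
        ∫ y in Eset d K T w μ (αbar (T - n)) (α (T - n)) C₁ C₂,
          ddpmKernel d (α (T - n)) (gmmScore d K w μ (αbar (T - n))) y x *
            min (mixDensity d K w μ (αbar (T - n)) y)
              (pbarMinus d K T w μ αbar α C₁ C₂ n y)

/-- The function `Δ_t(x) = p_{X_t^GMM}(x) - p_{Ȳ_t}(x)`. -/
def DeltaFn (d K T : ℕ) (w : Fin K → ℝ) (μ : Fin K → EuclideanSpace ℝ (Fin d))
    (αbar α : ℕ → ℝ) (C₁ C₂ : ℝ) (t : ℕ) (x : EuclideanSpace ℝ (Fin d)) : ℝ :=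
  mixDensity d K w μ (αbar t) x -
    min (mixDensity d K w μ (αbar t) x) (pbarMinus d K T w μ αbar α C₁ C₂ (T - t) x)

end

lemma aux_gauss_integral (d : ℕ) (m : EuclideanSpace ℝ (Fin d)) :
    ∫ x, gaussV d 1 m x = 1 := by
  unfold gaussV
  rw [integral_const_mul]
  have h1 : ∫ x : EuclideanSpace ℝ (Fin d), Real.exp (-‖x - m‖ ^ 2 / (2 * 1))
      = ∫ x : EuclideanSpace ℝ (Fin d), Real.exp (-(1 / 2) * ‖x‖ ^ 2) := by
    rw [← integral_sub_right_eq_self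
      (fun x : EuclideanSpace ℝ (Fin d) => Real.exp (-(1 / 2) * ‖x‖ ^ 2)) m]
    congr 1
    ext x
    congr 1
    ring
  rw [h1, GaussianFourier.integral_rexp_neg_mul_sq_norm (by norm_num)]
  rw [finrank_euclideanSpace, Fintype.card_fin]
  have h2 : Real.pi / (1 / 2) = 2 * Real.pi * 1 := by ring
  rw [h2, ← Real.rpow_add (by positivity)]
  have : -(d : ℝ) / 2 + (d : ℝ) / 2 = 0 := by ring
  rw [this, Real.rpow_zero]

lemma aux_gauss_integrable (d : ℕ) (m : EuclideanSpace ℝ (Fin d)) :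
    Integrable (gaussV d 1 m) := by
  by_contra h
  have h1 := aux_gauss_integral d m
  rw [integral_undef h] at h1
  norm_num at h1

lemma aux_gauss_nonneg (d : ℕ) (m x : EuclideanSpace ℝ (Fin d)) : 0 ≤ gaussV d 1 m x := by
  unfold gaussV
  positivity

lemma aux_gauss_shift (d : ℕ) (m v x : EuclideanSpace ℝ (Fin d)) :
    gaussV d 1 m x * Real.exp ⟪x, v⟫ =
      Real.exp (⟪m, v⟫ + ‖v‖ ^ 2 / 2) * gaussV d 1 (m + v) x := by
  unfold gaussV
  have : Real.exp (-‖x - m‖ ^ 2 / (2 * 1)) * Real.exp ⟪x, v⟫ =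
      Real.exp (⟪m, v⟫ + ‖v‖ ^ 2 / 2) * Real.exp (-‖x - (m + v)‖ ^ 2 / (2 * 1)) := by
    rw [← Real.exp_add, ← Real.exp_add]
    congr 1
    rw [← sub_sub, norm_sub_sq_real (x - m) v, inner_sub_left]
    ring
  calc _ = (2 * Real.pi * 1) ^ (-(d : ℝ) / 2) *
      (Real.exp (-‖x - m‖ ^ 2 / (2 * 1)) * Real.exp ⟪x, v⟫) := by ring
    _ = _ := by rw [this]; ring

/-- `e^{⟨x,v⟩} + e^{-⟨x,v⟩}`. -/
noncomputable def auxG (d : ℕ) (v x : EuclideanSpace ℝ (Fin d)) : ℝ :=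
  Real.exp ⟪x, v⟫ + Real.exp ⟪x, -v⟫

lemma aux_G_integrable (d : ℕ) (m v : EuclideanSpace ℝ (Fin d)) :
    Integrable (fun x => gaussV d 1 m x * auxG d v x) := by
  unfold auxG
  simp_rw [mul_add, aux_gauss_shift]
  exact ((aux_gauss_integrable d _).const_mul _).add ((aux_gauss_integrable d _).const_mul _)

lemma aux_G_integral (d : ℕ) (m v : EuclideanSpace ℝ (Fin d)) (hm : ‖m‖ ≤ 1) (hv : ‖v‖ ≤ 1) :
    ∫ x, gaussV d 1 m x * auxG d v x ≤ 2 * Real.exp 2 := by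
  unfold auxG
  simp_rw [mul_add, aux_gauss_shift]
  rw [integral_add ((aux_gauss_integrable d _).const_mul _)
    ((aux_gauss_integrable d _).const_mul _), integral_const_mul, integral_const_mul,
    aux_gauss_integral, aux_gauss_integral]
  have h0 : |⟪m, v⟫| ≤ 1 := (abs_real_inner_le_norm m v).trans
    (by nlinarith [norm_nonneg m, norm_nonneg v])
  have h1 := abs_le.1 h0
  have h2 : ‖v‖ ^ 2 ≤ 1 := by nlinarith [norm_nonneg v]
  have e1 : Real.exp (⟪m, v⟫ + ‖v‖ ^ 2 / 2) ≤ Real.exp 2 := Real.exp_le_exp.2 (by linarith)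
  have e2 : Real.exp (⟪m, -v⟫ + ‖-v‖ ^ 2 / 2) ≤ Real.exp 2 := by
    rw [inner_neg_right, norm_neg]
    exact Real.exp_le_exp.2 (by linarith)
  linarith

lemma aux_G_lower (d : ℕ) (v x : EuclideanSpace ℝ (Fin d)) :
    Real.exp |⟪x, v⟫| ≤ auxG d v x := by
  unfold auxG
  rw [inner_neg_right]
  rcases abs_cases ⟪x, v⟫ with h | h <;> rw [h.1]
  · linarith [Real.exp_pos (-⟪x, v⟫)]
  · linarith [Real.exp_pos (⟪x, v⟫)]

lemma aux_G_nonneg (d : ℕ) (v x : EuclideanSpace ℝ (Fin d)) : 0 ≤ auxG d v x := by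
  unfold auxG
  positivity

lemma aux_gauss_diff (d : ℕ) (m x : EuclideanSpace ℝ (Fin d)) :
    gaussV d 1 m x - gaussV d 1 0 x ≤ gaussV d 1 m x * |⟪x, m⟫| := by
  have h : gaussV d 1 0 x = gaussV d 1 m x * Real.exp (-⟪x, m⟫ + ‖m‖ ^ 2 / 2) := by
    unfold gaussV
    rw [mul_assoc _ (Real.exp _), ← Real.exp_add]
    congr 2
    rw [norm_sub_sq_real x m, sub_zero]
    ring
  rw [h]
  have h1 := Real.add_one_le_exp (-⟪x, m⟫ + ‖m‖ ^ 2 / 2)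
  have h2 := le_abs_self ⟪x, m⟫
  have h3 := sq_nonneg ‖m‖
  have : gaussV d 1 m x * (1 - Real.exp (-⟪x, m⟫ + ‖m‖ ^ 2 / 2)) ≤
      gaussV d 1 m x * |⟪x, m⟫| :=
    mul_le_mul_of_nonneg_left (by linarith) (aux_gauss_nonneg d m x)
  linarith

lemma aux_post_nonneg {d K : ℕ} {w : Fin K → ℝ} (μ : Fin K → EuclideanSpace ℝ (Fin d))
    (hw : ∀ k, 0 < w k) (abar : ℝ) (k : Fin K) (x : EuclideanSpace ℝ (Fin d)) :
    0 ≤ postWeight d K w μ abar k x := by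
  unfold postWeight
  exact div_nonneg (mul_nonneg (hw k).le (Real.exp_pos _).le)
    (Finset.sum_nonneg fun i _ => mul_nonneg (hw i).le (Real.exp_pos _).le)

lemma aux_post_sum {d K : ℕ} {w : Fin K → ℝ} (μ : Fin K → EuclideanSpace ℝ (Fin d))
    (hw : ∀ k, 0 < w k) (hs : ∑ k, w k = 1) (abar : ℝ) (x : EuclideanSpace ℝ (Fin d)) :
    ∑ k, postWeight d K w μ abar k x = 1 := by
  unfold postWeight
  rw [← Finset.sum_div]
  apply div_self
  apply ne_of_gt
  apply Finset.sum_pos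
  · intro i _
    exact mul_pos (hw i) (Real.exp_pos _)
  · rw [Finset.nonempty_iff_ne_empty]
    intro h
    rw [h] at hs
    simp at hs

/-- A convex average stays below an upper bound. -/
lemma aux_avg_le {K : ℕ} (p f : Fin K → ℝ) (hp : ∀ k, 0 ≤ p k) (hs : ∑ k, p k = 1) (M : ℝ)
    (hf : ∀ k, f k ≤ M) : ∑ k, p k * f k ≤ M := by
  calc ∑ k, p k * f k ≤ ∑ k, p k * M :=
        Finset.sum_le_sum fun k _ => mul_le_mul_of_nonneg_left (hf k) (hp k)
    _ = M := by rw [← Finset.sum_mul, hs, one_mul]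

lemma aux_le_avg {K : ℕ} (p f : Fin K → ℝ) (hp : ∀ k, 0 ≤ p k) (hs : ∑ k, p k = 1) (M : ℝ)
    (hf : ∀ k, M ≤ f k) : M ≤ ∑ k, p k * f k := by
  calc M = ∑ k, p k * M := by rw [← Finset.sum_mul, hs, one_mul]
    _ ≤ ∑ k, p k * f k :=
        Finset.sum_le_sum fun k _ => mul_le_mul_of_nonneg_left (hf k) (hp k)

lemma aux_zeta {d K : ℕ} {w : Fin K → ℝ} (μ : Fin K → EuclideanSpace ℝ (Fin d))
    (hw : ∀ k, 0 < w k) (hs : ∑ k, w k = 1) (abar a e B : ℝ) (ha : 0 < a) (ha1 : a ≤ 1)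
    (he : ∀ k, ‖Real.sqrt abar • μ k‖ ≤ e) (x : EuclideanSpace ℝ (Fin d))
    (hB : ∀ k, |⟪x, Real.sqrt abar • μ k⟫| ≤ B) (k : Fin K) :
    -(zeta d K w μ abar a k x) ≤ (1 - a) / a ^ 2 * (6 * B + 3 * e ^ 2) := by
  have hp := fun i => aux_post_nonneg μ hw abar i x
  have hps := aux_post_sum μ hw hs abar x
  unfold zeta gmmScore
  set p := fun i => postWeight d K w μ abar i x with hpdef
  set m := fun i => Real.sqrt abar • μ i with hmdef
  have he0 : 0 ≤ e := (norm_nonneg _).trans (he k)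
  have hB0 : 0 ≤ B := (abs_nonneg _).trans (hB k)
  have hm2 : ∀ i, ‖m i‖ ^ 2 ≤ e ^ 2 := fun i => pow_le_pow_left₀ (norm_nonneg _) (he i) 2
  have hA : ∀ i, ‖x - m i‖ ^ 2 ≤ ‖x‖ ^ 2 + 2 * B + e ^ 2 := by
    intro i
    rw [norm_sub_sq_real]
    have := abs_le.1 (hB i)
    have := hm2 i
    simp only [hmdef] at *
    linarith
  have hA' : ∀ i, ‖x‖ ^ 2 - 2 * B ≤ ‖x - m i‖ ^ 2 := by
    intro i
    rw [norm_sub_sq_real]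
    have := abs_le.1 (hB i)
    have := sq_nonneg ‖m i‖
    simp only [hmdef] at *
    linarith
  have h1 : ∑ i, p i * ‖x - m i‖ ^ 2 ≤ ‖x‖ ^ 2 + 2 * B + e ^ 2 := aux_avg_le p _ hp hps _ hA
  have h2 : -(4 * B + e ^ 2) ≤ ‖x - m k‖ ^ 2 - ∑ i, p i * ‖x - m i‖ ^ 2 := by
    linarith [hA' k]
  have hmb : ∀ i, |⟪∑ j, p j • m j, m i⟫| ≤ e ^ 2 := by
    intro i
    rw [sum_inner]
    have hq : ∀ j, |⟪m j, m i⟫| ≤ e ^ 2 := fun j =>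
      (abs_real_inner_le_norm _ _).trans (by
        rw [sq]
        exact mul_le_mul (he j) (he i) (norm_nonneg _) he0)
    simp_rw [real_inner_smul_left]
    rw [abs_le]
    exact ⟨aux_le_avg p _ hp hps _ fun j => (abs_le.1 (hq j)).1,
      aux_avg_le p _ hp hps _ fun j => (abs_le.1 (hq j)).2⟩
  have hsc : -x + Real.sqrt abar • ∑ j, p j • μ j = -x + ∑ j, p j • m j := by
    rw [Finset.smul_sum]
    congr 1
    refine Finset.sum_congr rfl fun j _ => ?_
    rw [smul_comm]
  have hsi : ∀ i, |⟪-x + ∑ j, p j • m j, m i⟫| ≤ B + e ^ 2 := by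
    intro i
    rw [inner_add_left, inner_neg_left]
    have h3 := abs_le.1 (hB i)
    have h4 := abs_le.1 (hmb i)
    rw [abs_le]
    constructor <;> linarith
  have h3 : -(2 * B + 2 * e ^ 2) ≤ ⟪-x + Real.sqrt abar • ∑ j, p j • μ j,
      ∑ i, p i • (Real.sqrt abar • (μ i - μ k))⟫ := by
    rw [hsc, inner_sum]
    simp_rw [real_inner_smul_right _ (Real.sqrt abar • _) (p _), smul_sub, inner_sub_right]
    apply aux_le_avg p _ hp hps
    intro i
    have h5 := abs_le.1 (hsi i)
    have h6 := abs_le.1 (hsi k)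
    simp only [hmdef] at *
    linarith
  have hc : 0 ≤ (1 - a) / a ^ 2 := div_nonneg (by linarith) (by positivity)
  have hc' : (1 - a ^ 2) / (2 * a ^ 2) = (1 - a) / a ^ 2 * ((1 + a) / 2) := by
    field_simp
    ring
  have h4 := mul_le_mul_of_nonneg_left h3 hc
  have hc1 : 0 ≤ (1 - a ^ 2) / (2 * a ^ 2) := by rw [hc']; positivity
  have hc2 : (1 - a ^ 2) / (2 * a ^ 2) ≤ (1 - a) / a ^ 2 := by
    rw [hc']
    nlinarith
  have h5 := mul_le_mul_of_nonneg_left h2 hc1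
  have h6 : (1 - a ^ 2) / (2 * a ^ 2) * (4 * B + e ^ 2) ≤ (1 - a) / a ^ 2 * (4 * B + e ^ 2) :=
    mul_le_mul_of_nonneg_right hc2 (by positivity)
  simp only [hpdef, hmdef] at *
  linarith

lemma aux_trace {d K : ℕ} {w : Fin K → ℝ} (μ : Fin K → EuclideanSpace ℝ (Fin d))
    (hw : ∀ k, 0 < w k) (hs : ∑ k, w k = 1) (abar e : ℝ) (hab : 0 ≤ abar)
    (he : ∀ k, ‖Real.sqrt abar • μ k‖ ≤ e) (x : EuclideanSpace ℝ (Fin d)) :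
    Matrix.trace (1 + gmmJac d K w μ abar x) ≤ e ^ 2 := by
  have hp := fun i => aux_post_nonneg μ hw abar i x
  have hps := aux_post_sum μ hw hs abar x
  have h1 : Matrix.trace (1 + gmmJac d K w μ abar x) ≤
      ∑ i, abar * ∑ k, postWeight d K w μ abar k x * (μ k i * μ k i) := by
    unfold Matrix.trace
    apply Finset.sum_le_sum
    intro i _
    simp only [Matrix.diag_apply, Matrix.add_apply, Matrix.one_apply_eq, gmmJac, Matrix.of_apply,
      if_true]
    have := mul_nonneg hab (mul_self_nonneg (∑ k, postWeight d K w μ abar k x * μ k i))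
    linarith
  refine h1.trans ?_
  have h2 : ∑ i, abar * ∑ k, postWeight d K w μ abar k x * (μ k i * μ k i) =
      ∑ k, postWeight d K w μ abar k x * ‖Real.sqrt abar • μ k‖ ^ 2 := by
    simp_rw [Finset.mul_sum]
    rw [Finset.sum_comm]
    refine Finset.sum_congr rfl fun k _ => ?_
    rw [norm_smul, mul_pow, Real.norm_eq_abs, sq_abs, Real.sq_sqrt hab,
      EuclideanSpace.norm_sq_eq, Finset.mul_sum, Finset.mul_sum]
    refine Finset.sum_congr rfl fun i _ => ?_
    rw [Real.norm_eq_abs, sq_abs]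
    ring
  rw [h2]
  exact aux_avg_le _ _ hp hps _ fun k => pow_le_pow_left₀ (norm_nonneg _) (he k) 2

lemma aux_mem_E {d K T : ℕ} {w : Fin K → ℝ} (μ : Fin K → EuclideanSpace ℝ (Fin d))
    (hw : ∀ k, 0 < w k) (hs : ∑ k, w k = 1) (abar a e c₁ : ℝ) (hab : 0 ≤ abar) (hc₁ : 0 < c₁)
    (ha : 1 / (1 + c₁) ≤ a) (ha1 : c₁ / (4 * T * (1 + c₁)) ≤ 1 - a) (hT : 2 ≤ T)
    (hL : 1 ≤ Real.log ((K : ℝ) * T)) (he0 : 0 < e) (heT : e ≤ 1 / T)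
    (he : ∀ k, ‖Real.sqrt abar • μ k‖ ≤ e) (x : EuclideanSpace ℝ (Fin d))
    (hB : ∀ k, |⟪x, Real.sqrt abar • μ k⟫| ≤ 4 * Real.log ((K : ℝ) * T) * e) :
    x ∈ Eset d K T w μ abar a 1 (108 * (1 + c₁) ^ 3 / c₁) := by
  set L := Real.log ((K : ℝ) * T) with hLdef
  have hTr : (2 : ℝ) ≤ T := by exact_mod_cast hT
  have he1 : e ≤ 1 := heT.trans (by rw [div_le_one (by linarith)]; linarith)
  have ha0 : 0 < a := lt_of_lt_of_le (by positivity) ha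
  have h1a : 0 < 1 - a := lt_of_lt_of_le (by positivity) ha1
  refine ⟨?_, ?_⟩
  · refine (aux_trace μ hw hs abar e hab he x).trans ?_
    rw [one_mul]
    nlinarith
  · apply aux_avg_le _ _ (fun i => aux_post_nonneg μ hw abar i x) (aux_post_sum μ hw hs abar x)
    intro k
    apply Real.exp_le_exp.2
    refine (aux_zeta μ hw hs abar a e _ ha0 (by linarith) he x hB k).trans ?_
    rw [← hLdef]
    have hinv : 1 / a ^ 2 ≤ (1 + c₁) ^ 2 := by
      rw [div_le_iff₀ (by positivity)]
      have h1 : 1 ≤ (1 + c₁) * a := by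
        rw [div_le_iff₀ (by positivity)] at ha
        linarith
      calc (1 : ℝ) ≤ ((1 + c₁) * a) ^ 2 := one_le_pow₀ h1
        _ = _ := by ring
    have hE : 6 * (4 * L * e) + 3 * e ^ 2 ≤ 27 * L ^ 2 * (1 / T) := by
      have : 6 * (4 * L * e) + 3 * e ^ 2 ≤ 27 * L ^ 2 * e := by
        have h1 : 6 * (4 * L) + 3 * e ≤ 27 * L ^ 2 := by nlinarith
        nlinarith
      refine this.trans ?_
      exact mul_le_mul_of_nonneg_left heT (by positivity)
    calc (1 - a) / a ^ 2 * (6 * (4 * L * e) + 3 * e ^ 2)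
        ≤ (1 - a) / a ^ 2 * (27 * L ^ 2 * (1 / T)) :=
          mul_le_mul_of_nonneg_left hE (by positivity)
      _ = 1 / a ^ 2 * ((1 - a) * (27 * L ^ 2 * (1 / T))) := by ring
      _ ≤ (1 + c₁) ^ 2 * ((1 - a) * (27 * L ^ 2 * (1 / T))) :=
          mul_le_mul_of_nonneg_right hinv (by positivity)
      _ = (108 * (1 + c₁) ^ 3 / c₁ * (1 - a) * L ^ 2) * (c₁ / (4 * T * (1 + c₁))) := by
          field_simp
          ring
      _ ≤ (108 * (1 + c₁) ^ 3 / c₁ * (1 - a) * L ^ 2) * (1 - a) :=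
          mul_le_mul_of_nonneg_left ha1 (by positivity)
      _ = _ := by ring

/-- Facts about the last step `α_T` of the schedule. -/
lemma aux_alpha (T : ℕ) (hT : 2 ≤ T) (b c₁ a : ℝ) (hb0 : 0 < b) (hb : b ≤ 1 / 2) (hc₁ : 0 < c₁)
    (ha : a = b / (b + c₁ * (Real.log T / T) * b * (1 - b))) :
    1 / (1 + c₁) ≤ a ∧ c₁ / (4 * T * (1 + c₁)) ≤ 1 - a := by
  have hTr : (2 : ℝ) ≤ T := by exact_mod_cast hT
  have hlog : 1 / 2 ≤ Real.log T := by
    have h1 : Real.log 2 ≤ Real.log T := Real.log_le_log (by norm_num) hTr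
    have h2 := Real.log_two_gt_d9
    linarith
  have hlog2 : Real.log T ≤ T := (Real.log_le_sub_one_of_pos (by linarith)).trans (by linarith)
  set y := c₁ * (Real.log T / T) * (1 - b) with hy
  have hr0 : 0 < Real.log T / T := by positivity
  have hr1 : Real.log T / T ≤ 1 := by rw [div_le_one (by linarith)]; exact hlog2
  have hr2 : 1 / (2 * T) ≤ Real.log T / T := by
    rw [div_le_div_iff₀ (by positivity) (by positivity)]
    nlinarith
  have hy0 : 0 < y := mul_pos (mul_pos hc₁ hr0) (by linarith)
  have hy1 : y ≤ c₁ := by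
    calc y ≤ c₁ * 1 * 1 := by
          rw [hy]
          gcongr
          · linarith
          · linarith
      _ = c₁ := by ring
  have hy2 : c₁ / (4 * T) ≤ y := by
    calc c₁ / (4 * T) = c₁ * (1 / (2 * T)) * (1 / 2) := by field_simp; ring
      _ ≤ y := by
          rw [hy]
          gcongr
          linarith
  have ha' : a = 1 / (1 + y) := by
    rw [ha, show b + c₁ * (Real.log T / T) * b * (1 - b) = b * (1 + y) by rw [hy]; ring]
    field_simp
  rw [ha']
  constructor
  · gcongr
  · calc c₁ / (4 * T * (1 + c₁)) = c₁ / (4 * T) / (1 + c₁) := by rw [div_div]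
      _ ≤ y / (1 + y) := by gcongr
      _ = 1 - 1 / (1 + y) := by field_simp; ring

lemma aux_mix_nonneg {d K : ℕ} {w : Fin K → ℝ} (μ : Fin K → EuclideanSpace ℝ (Fin d))
    (hw : ∀ k, 0 < w k) (abar : ℝ) (x : EuclideanSpace ℝ (Fin d)) :
    0 ≤ mixDensity d K w μ abar x :=
  Finset.sum_nonneg fun k _ => mul_nonneg (hw k).le (aux_gauss_nonneg d _ x)

lemma aux_mix_diff {d K : ℕ} {w : Fin K → ℝ} (μ : Fin K → EuclideanSpace ℝ (Fin d))
    (hw : ∀ k, 0 < w k) (hs : ∑ k, w k = 1) (abar e : ℝ) (he0 : 0 < e)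
    (x : EuclideanSpace ℝ (Fin d)) :
    mixDensity d K w μ abar x - gaussV d 1 0 x ≤
      ∑ k, w k * (e * (gaussV d 1 (Real.sqrt abar • μ k) x *
        auxG d (e⁻¹ • Real.sqrt abar • μ k) x)) := by
  have h1 : mixDensity d K w μ abar x - gaussV d 1 0 x =
      ∑ k, w k * (gaussV d 1 (Real.sqrt abar • μ k) x - gaussV d 1 0 x) := by
    unfold mixDensity
    simp_rw [mul_sub]
    rw [Finset.sum_sub_distrib, ← Finset.sum_mul, hs, one_mul]
  rw [h1]
  apply Finset.sum_le_sum
  intro k _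
  apply mul_le_mul_of_nonneg_left _ (hw k).le
  refine (aux_gauss_diff d _ x).trans ?_
  have h2 : |⟪x, Real.sqrt abar • μ k⟫| ≤ e * auxG d (e⁻¹ • Real.sqrt abar • μ k) x := by
    have h3 : |⟪x, Real.sqrt abar • μ k⟫| = e * |⟪x, e⁻¹ • Real.sqrt abar • μ k⟫| := by
      rw [real_inner_smul_right x _ e⁻¹, abs_mul, abs_of_pos (inv_pos.2 he0)]
      field_simp
    rw [h3]
    apply mul_le_mul_of_nonneg_left _ he0.le
    refine le_trans ?_ (aux_G_lower d _ x)
    linarith [Real.add_one_le_exp |⟪x, e⁻¹ • Real.sqrt abar • μ k⟫|]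
  calc _ ≤ gaussV d 1 (Real.sqrt abar • μ k) x *
        (e * auxG d (e⁻¹ • Real.sqrt abar • μ k) x) :=
        mul_le_mul_of_nonneg_left h2 (aux_gauss_nonneg d _ x)
    _ = _ := by ring

/-- Lemma 2. For the auxiliary reverse process, the function
`Δ_T(x) := p_{X_T^GMM}(x) − p_{Ȳ_T}(x)` satisfies `∫_{ℝ^d} Δ_T(x) dx ≤ C T^{−3}`
for some absolute constant `C > 0`. -/
theorem stmt3 :
    ∀ cR : ℝ, 0 < cR →
      ∃ c₀₀ c₁₀ : ℝ, 0 < c₀₀ ∧ 0 < c₁₀ ∧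
        ∀ c₀ c₁ : ℝ, c₀₀ ≤ c₀ → c₁₀ ≤ c₁ → 4 < c₁ / c₀ →
          ∃ C₁ C₂ C : ℝ, 0 < C₁ ∧ 0 < C₂ ∧ 0 < C ∧
            ∀ (d K T : ℕ), 1 ≤ d → 1 ≤ K → 1 ≤ T →
              ∀ (w : Fin K → ℝ) (μ : Fin K → EuclideanSpace ℝ (Fin d)),
                (∀ k, w k ∈ Set.Ioo (0 : ℝ) 1) → (∑ k, w k = 1) →
                (∀ k, ‖μ k‖ ≤ (T : ℝ) ^ cR) →
                ∀ (αbar α : ℕ → ℝ),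
                  αbar T = (T : ℝ) ^ (-c₀) →
                  (∀ t : ℕ, 2 ≤ t → t ≤ T →
                    αbar (t - 1) = αbar t + c₁ * (Real.log T / T) * αbar t * (1 - αbar t)) →
                  (∀ t : ℕ, 2 ≤ t → t ≤ T → α t = αbar t / αbar (t - 1)) →
                  α 1 = αbar 1 →
                  (∫ x, DeltaFn d K T w μ αbar α C₁ C₂ T x) ≤ C / (T : ℝ) ^ 3 := by
  intro cR hcR
  refine ⟨2 * cR + 6, 1, by linarith, one_pos, ?_⟩
  intro c₀ c₁ hc₀ hc₁ _
  have hc₁0 : 0 < c₁ := by linarith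
  refine ⟨1, 108 * (1 + c₁) ^ 3 / c₁, 4 * Real.exp 2, one_pos, by positivity, by positivity, ?_⟩
  intro d K T hd hK hT w μ hw' hs hμ αbar α hαT hrec hα hα1
  have hw : ∀ k, 0 < w k := fun k => (hw' k).1
  have hK2 : 2 ≤ K := by
    by_contra h
    have hK1 : K = 1 := by omega
    subst hK1
    have := (hw' 0).2
    simp at hs
    linarith
  have hDelta0 : ∀ x, 0 ≤ DeltaFn d K T w μ αbar α 1 (108 * (1 + c₁) ^ 3 / c₁) T x := fun x =>
    sub_nonneg.2 (min_le_left _ _)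
  -- generic bound on exponential
  have hexp : (1 : ℝ) ≤ Real.exp 2 := Real.one_le_exp (by norm_num)
  set E := Eset d K T w μ (αbar T) (α T) 1 (108 * (1 + c₁) ^ 3 / c₁) with hE
  have hDeltaE : ∀ x ∈ E, DeltaFn d K T w μ αbar α 1 (108 * (1 + c₁) ^ 3 / c₁) T x =
      mixDensity d K w μ (αbar T) x - min (mixDensity d K w μ (αbar T) x) (gaussV d 1 0 x) := by
    intro x hx
    unfold DeltaFn
    rw [Nat.sub_self, pbarMinus, Set.indicator_of_mem hx]
  have hDeltaLe : ∀ x, DeltaFn d K T w μ αbar α 1 (108 * (1 + c₁) ^ 3 / c₁) T x ≤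
      mixDensity d K w μ (αbar T) x := by
    intro x
    unfold DeltaFn
    rw [Nat.sub_self, pbarMinus]
    have : 0 ≤ min (mixDensity d K w μ (αbar T) x)
        ((Eset d K T w μ (αbar T) (α T) 1 (108 * (1 + c₁) ^ 3 / c₁)).indicator
          (gaussV d 1 0) x) :=
      le_min (aux_mix_nonneg μ hw _ x)
        (Set.indicator_nonneg (fun y _ => aux_gauss_nonneg d 0 y) x)
    linarith
  rcases Nat.lt_or_ge T 2 with hT1 | hT2
  · have hT' : T = 1 := by omega
    have hTr : (T : ℝ) = 1 := by exact_mod_cast hT'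
    rw [hTr]
    have hI : Integrable (mixDensity d K w μ (αbar T)) := by
      unfold mixDensity
      exact integrable_finsetSum _ fun k _ => (aux_gauss_integrable d _).const_mul _
    have h1 : (∫ x, DeltaFn d K T w μ αbar α 1 (108 * (1 + c₁) ^ 3 / c₁) T x) ≤
        ∫ x, mixDensity d K w μ (αbar T) x :=
      integral_mono_of_nonneg (Filter.Eventually.of_forall hDelta0) hI
        (Filter.Eventually.of_forall hDeltaLe)
    have h2 : ∫ x, mixDensity d K w μ (αbar T) x = 1 := by
      unfold mixDensity
      rw [integral_finsetSum _ fun k _ => (aux_gauss_integrable d _).const_mul _]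
      simp_rw [integral_const_mul, aux_gauss_integral, mul_one]
      exact hs
    rw [h2] at h1
    refine h1.trans ?_
    norm_num
    linarith
  · have hTr : (2 : ℝ) ≤ T := by exact_mod_cast hT2
    have hKr : (2 : ℝ) ≤ K := by exact_mod_cast hK2
    have hT0 : (0 : ℝ) < T := by linarith
    have hab : 0 < αbar T := by rw [hαT]; positivity
    have hab2 : αbar T ≤ 1 / 2 := by
      rw [hαT]
      calc (T : ℝ) ^ (-c₀) ≤ (T : ℝ) ^ (-1 : ℝ) :=
            Real.rpow_le_rpow_of_exponent_le (by linarith) (by linarith)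
        _ = 1 / T := by rw [Real.rpow_neg_one, one_div]
        _ ≤ 1 / 2 := by gcongr
    have hαeq := hα T hT2 le_rfl
    rw [hrec T hT2 le_rfl] at hαeq
    obtain ⟨ha, ha1⟩ := aux_alpha T hT2 (αbar T) c₁ (α T) hab hab2 hc₁0 hαeq
    set e : ℝ := (T : ℝ) ^ (cR - c₀ / 2) with hedef
    have he0 : 0 < e := by positivity
    have he3 : e ≤ 1 / (T : ℝ) ^ 3 := by
      calc e ≤ (T : ℝ) ^ (-3 : ℝ) :=
            Real.rpow_le_rpow_of_exponent_le (by linarith) (by linarith)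
        _ = 1 / (T : ℝ) ^ 3 := by
            rw [Real.rpow_neg hT0.le, one_div]
            norm_cast
    have heT : e ≤ 1 / T := he3.trans (by
      apply one_div_le_one_div_of_le hT0
      exact le_self_pow₀ (by linarith) (by norm_num))
    have he1 : e ≤ 1 := heT.trans (by rw [div_le_one hT0]; linarith)
    have hm : ∀ k, ‖Real.sqrt (αbar T) • μ k‖ ≤ e := by
      intro k
      rw [norm_smul, Real.norm_eq_abs, abs_of_nonneg (Real.sqrt_nonneg _), hαT,
        Real.sqrt_eq_rpow, ← Real.rpow_mul hT0.le]
      calc (T : ℝ) ^ (-c₀ * (1 / 2)) * ‖μ k‖ ≤ (T : ℝ) ^ (-c₀ * (1 / 2)) * (T : ℝ) ^ cR :=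
            mul_le_mul_of_nonneg_left (hμ k) (by positivity)
        _ = e := by
            rw [← Real.rpow_add hT0, hedef]
            congr 1
            ring
    set m : Fin K → EuclideanSpace ℝ (Fin d) := fun k => Real.sqrt (αbar T) • μ k with hmdef
    set v : Fin K → EuclideanSpace ℝ (Fin d) := fun k => e⁻¹ • Real.sqrt (αbar T) • μ k with hvdef
    have hv : ∀ k, ‖v k‖ ≤ 1 := by
      intro k
      simp only [hvdef]
      rw [norm_smul, Real.norm_eq_abs, abs_of_pos (inv_pos.2 he0), inv_mul_le_iff₀ he0, mul_one]
      exact hm k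
    have hL : 1 ≤ Real.log ((K : ℝ) * T) := by
      rw [Real.le_log_iff_exp_le (by positivity)]
      have := Real.exp_one_lt_d9
      nlinarith
    set L := Real.log ((K : ℝ) * T) with hLdef
    have hexpL : Real.exp (-(4 * L)) = 1 / ((K : ℝ) * T) ^ 4 := by
      rw [Real.exp_neg, one_div]
      congr 1
      rw [show (4 : ℝ) * L = ((4 : ℕ) : ℝ) * L by norm_num, Real.exp_nat_mul, hLdef,
        Real.exp_log (by positivity)]
    -- the dominating function
    let F : EuclideanSpace ℝ (Fin d) → ℝ := fun x =>
      (∑ k, w k * (e * (gaussV d 1 (m k) x * auxG d (v k) x))) +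
        ∑ k, w k * ∑ j, Real.exp (-(4 * L)) * (gaussV d 1 (m k) x * auxG d (v j) x)
    have hdom : ∀ x, DeltaFn d K T w μ αbar α 1 (108 * (1 + c₁) ^ 3 / c₁) T x ≤ F x := by
      intro x
      have hn1 : 0 ≤ ∑ k, w k * (e * (gaussV d 1 (m k) x * auxG d (v k) x)) :=
        Finset.sum_nonneg fun k _ => mul_nonneg (hw k).le (mul_nonneg he0.le
          (mul_nonneg (aux_gauss_nonneg d _ x) (aux_G_nonneg d _ x)))
      have hn2 : 0 ≤ ∑ k, w k * ∑ j, Real.exp (-(4 * L)) *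
          (gaussV d 1 (m k) x * auxG d (v j) x) :=
        Finset.sum_nonneg fun k _ => mul_nonneg (hw k).le (Finset.sum_nonneg fun j _ =>
          mul_nonneg (Real.exp_pos _).le
          (mul_nonneg (aux_gauss_nonneg d _ x) (aux_G_nonneg d _ x)))
      by_cases hx : x ∈ E
      · rw [hDeltaE x hx]
        have h1 := aux_mix_diff μ hw hs (αbar T) e he0 x
        have : mixDensity d K w μ (αbar T) x -
            min (mixDensity d K w μ (αbar T) x) (gaussV d 1 0 x) ≤
            ∑ k, w k * (e * (gaussV d 1 (m k) x * auxG d (v k) x)) := by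
          rcases min_choice (mixDensity d K w μ (αbar T) x) (gaussV d 1 0 x) with h | h <;> rw [h]
          · rw [sub_self]; exact hn1
          · exact h1
        simp only [F]
        linarith
      · refine (hDeltaLe x).trans ?_
        have hj : ∃ j, 4 * L * e < |⟪x, m j⟫| := by
          by_contra hcon
          push Not at hcon
          exact hx (aux_mem_E μ hw hs (αbar T) (α T) e c₁ hab.le hc₁0 ha ha1 hT2 hL he0 heT hm x
            hcon)
        obtain ⟨j, hj⟩ := hj
        have hj' : 4 * L ≤ |⟪x, v j⟫| := by
          simp only [hvdef]
          rw [real_inner_smul_right x _ e⁻¹, abs_mul, abs_of_pos (inv_pos.2 he0),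
            le_inv_mul_iff₀ he0]
          simp only [hmdef] at hj
          linarith
        have h1 : 1 ≤ ∑ j, Real.exp (-(4 * L)) * auxG d (v j) x := by
          have h2 : 1 ≤ Real.exp (-(4 * L)) * auxG d (v j) x := by
            calc (1 : ℝ) = Real.exp (-(4 * L)) * Real.exp (4 * L) := by
                  rw [← Real.exp_add]; simp
              _ ≤ _ := mul_le_mul_of_nonneg_left
                  ((Real.exp_le_exp.2 hj').trans (aux_G_lower d _ x)) (Real.exp_pos _).le
          refine h2.trans ?_
          exact Finset.single_le_sum (f := fun j => Real.exp (-(4 * L)) * auxG d (v j) x)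
            (fun i _ => mul_nonneg (Real.exp_pos _).le (aux_G_nonneg d _ x)) (Finset.mem_univ j)
        have h2 : mixDensity d K w μ (αbar T) x ≤
            ∑ k, w k * ∑ j, Real.exp (-(4 * L)) * (gaussV d 1 (m k) x * auxG d (v j) x) := by
          unfold mixDensity
          apply Finset.sum_le_sum
          intro k _
          apply mul_le_mul_of_nonneg_left _ (hw k).le
          calc gaussV d 1 (m k) x = gaussV d 1 (m k) x * 1 := (mul_one _).symm
            _ ≤ gaussV d 1 (m k) x * ∑ j, Real.exp (-(4 * L)) * auxG d (v j) x :=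
                mul_le_mul_of_nonneg_left h1 (aux_gauss_nonneg d _ x)
            _ = _ := by
                rw [Finset.mul_sum]
                refine Finset.sum_congr rfl fun j _ => ?_
                ring
        simp only [F]
        linarith
    have hi1 : ∀ k ∈ (Finset.univ : Finset (Fin K)), Integrable
        (fun x => w k * (e * (gaussV d 1 (m k) x * auxG d (v k) x))) := fun k _ =>
      ((aux_G_integrable d _ _).const_mul _).const_mul _
    have hi2 : ∀ k, ∀ j ∈ (Finset.univ : Finset (Fin K)), Integrable
        (fun x => Real.exp (-(4 * L)) * (gaussV d 1 (m k) x * auxG d (v j) x)) := fun k j _ =>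
      (aux_G_integrable d _ _).const_mul _
    have hi3 : ∀ k ∈ (Finset.univ : Finset (Fin K)), Integrable
        (fun x => w k * ∑ j, Real.exp (-(4 * L)) * (gaussV d 1 (m k) x * auxG d (v j) x)) :=
      fun k _ => (integrable_finsetSum _ (hi2 k)).const_mul _
    have hFi : Integrable F := (integrable_finsetSum _ hi1).add (integrable_finsetSum _ hi3)
    have hle : (∫ x, DeltaFn d K T w μ αbar α 1 (108 * (1 + c₁) ^ 3 / c₁) T x) ≤ ∫ x, F x :=
      integral_mono_of_nonneg (Filter.Eventually.of_forall hDelta0) hFi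
        (Filter.Eventually.of_forall hdom)
    refine hle.trans ?_
    have hGb : ∀ k j, ∫ x, gaussV d 1 (m k) x * auxG d (v j) x ≤ 2 * Real.exp 2 := fun k j =>
      aux_G_integral d _ _ ((hm k).trans he1) (hv j)
    have hI1 : (∫ x, ∑ k, w k * (e * (gaussV d 1 (m k) x * auxG d (v k) x))) ≤
        e * (2 * Real.exp 2) := by
      rw [integral_finsetSum _ hi1]
      simp_rw [integral_const_mul]
      exact aux_avg_le w _ (fun k => (hw k).le) hs _ fun k =>
        mul_le_mul_of_nonneg_left (hGb k k) he0.le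
    have hI2 : (∫ x, ∑ k, w k * ∑ j, Real.exp (-(4 * L)) *
        (gaussV d 1 (m k) x * auxG d (v j) x)) ≤
        K * (Real.exp (-(4 * L)) * (2 * Real.exp 2)) := by
      rw [integral_finsetSum _ hi3]
      simp_rw [integral_const_mul]
      apply aux_avg_le w _ (fun k => (hw k).le) hs
      intro k
      rw [integral_finsetSum _ (hi2 k)]
      simp_rw [integral_const_mul]
      calc _ ≤ ∑ _j : Fin K, Real.exp (-(4 * L)) * (2 * Real.exp 2) :=
            Finset.sum_le_sum fun j _ =>
              mul_le_mul_of_nonneg_left (hGb k j) (Real.exp_pos _).le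
        _ = _ := by simp
    have hsplit : ∫ x, F x = (∫ x, ∑ k, w k * (e * (gaussV d 1 (m k) x * auxG d (v k) x))) +
        ∫ x, ∑ k, w k * ∑ j, Real.exp (-(4 * L)) * (gaussV d 1 (m k) x * auxG d (v j) x) :=
      integral_add (integrable_finsetSum _ hi1) (integrable_finsetSum _ hi3)
    rw [hsplit]
    have hKe : K * Real.exp (-(4 * L)) ≤ 1 / (T : ℝ) ^ 3 := by
      rw [hexpL, mul_one_div, div_le_div_iff₀ (by positivity) (by positivity)]
      have h1 : (1 : ℝ) ≤ (K : ℝ) ^ 3 * T := by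
        have : (1 : ℝ) ≤ (K : ℝ) ^ 3 := one_le_pow₀ (by linarith)
        nlinarith
      calc (K : ℝ) * (T : ℝ) ^ 3 = (K * (T : ℝ) ^ 3) * 1 := by ring
        _ ≤ (K * (T : ℝ) ^ 3) * ((K : ℝ) ^ 3 * T) :=
            mul_le_mul_of_nonneg_left h1 (by positivity)
        _ = _ := by ring
    calc _ ≤ e * (2 * Real.exp 2) + K * (Real.exp (-(4 * L)) * (2 * Real.exp 2)) :=
          add_le_add hI1 hI2
      _ = (e + K * Real.exp (-(4 * L))) * (2 * Real.exp 2) := by ring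
      _ ≤ (1 / (T : ℝ) ^ 3 + 1 / (T : ℝ) ^ 3) * (2 * Real.exp 2) :=
          mul_le_mul_of_nonneg_right (add_le_add he3 hKe) (by positivity)
      _ = _ := by ring
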